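/- Let G be a finite group and let G = G_0 > G_1 > ... be a sequence where each G_{i+1} is a proper characteristic subgroup of G_i with G_i/G_{i+1} non-nilpotent. Define r_i = Σ_p log_p |(G_i ∩ S_p)Φ(S_p)/Φ(S_p)| for fixed Sylow p-subgroups S_p of G. Then r_i > r_{i+1} for each i, and hence the sequence has length at most r_0 = Σ_p d(S_p). -/

import Mathlib

/-!
The number `r_i` is the sum over `p` of the dimensions of the images of `G_i ∩ S_p` in the vector
spaces `S_p / Φ(S_p)`. It can only decrease along the chain, and if it stays the same from
`N = G_{i+1}` to `M = G_i`, then `M ∩ S_p ≤ N Φ(S_p)` for all `p`, so `M / N` is nilpotent by Tate's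
theorem. Burnside's basis theorem bounds the dimension of `S_p / Φ(S_p)` by the rank of `S_p`.

Tate's theorem reduces, modulo `N`, to the case `M ∩ P ≤ Φ(P)` with `P` a Sylow `p`-subgroup; put
`K = O^p(M)` and `R = K ∩ P`. For a `P`-invariant homomorphism `θ` from `R` onto an abelian
`p`-group, a transfer in `K ⋊ P` yields a homomorphism on `P` whose restriction to `R` is a power of
`θ` prime to `p`. Since `P` is generated by `R ≤ Φ(P)` and the kernel of this homomorphism, that
kernel is `P`, and so `θ = 1`. For `θ : R → R / [R, P]` this gives `R = [R, P]`, hence `R = 1`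
because `P` is nilpotent. So `O^p(M)` is a `p'`-group for every `p`, which makes `M` nilpotent.
-/

open Subgroup

section Transfer

variable {G A : Type*} [Group G] [CommGroup A]

theorem transfer_eq_pow_index {H : Subgroup G} [H.FiniteIndex] (ϕ : H →* A) {g : G} {a : A}
    (hg : ∀ x, x⁻¹ * g * x ∈ H) (hϕ : ∀ x, ϕ ⟨x⁻¹ * g * x, hg x⟩ = a) :
    ϕ.transfer g = a ^ H.index := by
  let T : H.LeftTransversal := default
  let _ := H.fintypeQuotientOfFiniteIndex
  have hfix (q : G ⧸ H) : g⁻¹ • q = q := by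
    obtain ⟨x, rfl⟩ := QuotientGroup.mk_surjective q
    rw [inv_smul_eq_iff, MulAction.Quotient.smul_mk, QuotientGroup.eq, smul_eq_mul, ← mul_assoc]
    exact hg x
  rw [MonoidHom.transfer_def ϕ T, leftTransversals.diff, index_eq_card, Nat.card_eq_fintype_card,
    ← Finset.card_univ, ← Finset.prod_const]
  refine Finset.prod_congr rfl fun q _ ↦ ?_
  simp only [smul_apply_eq_smul_apply_inv_smul, hfix, smul_eq_mul, ← mul_assoc]
  exact hϕ _

/-- The external semidirect product `K ⋊ P` of two subgroups of a group, of which the first is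
normal and is acted on by conjugation. -/
abbrev ConjSemidirectProduct (K P : Subgroup G) [K.Normal] : Type _ :=
  K ⋊[MulAut.conjNormal.comp P.subtype] P

namespace ConjSemidirectProduct

variable (K P : Subgroup G) [K.Normal]

/-- The multiplication homomorphism `(k, x) ↦ k * x` from `K ⋊ P` to the ambient group. -/
def toAmbient : ConjSemidirectProduct K P →* G :=
  SemidirectProduct.lift K.subtype P.subtype fun x ↦ by ext; simp

theorem range_toAmbient : (toAmbient K P).range = K ⊔ P := by
  refine le_antisymm ?_ (sup_le ?_ ?_)
  · rintro _ ⟨x, rfl⟩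
    exact mul_mem_sup x.left.2 x.right.2
  · exact fun k hk ↦ ⟨SemidirectProduct.inl ⟨k, hk⟩, by simp [toAmbient]⟩
  · exact fun x hx ↦ ⟨SemidirectProduct.inr ⟨x, hx⟩, by simp [toAmbient]⟩

variable {K P}

theorem mem_comap_toAmbient {x : ConjSemidirectProduct K P} :
    x ∈ P.comap (toAmbient K P) ↔ (x.left : G) ∈ P :=
  mul_mem_cancel_right x.right.2

/-- The homomorphism `(k, x) ↦ θ k` extending a `P`-invariant homomorphism `θ` on `K ∩ P` to the
preimage of `P` in `K ⋊ P`, which consists of the pairs `(k, x)` with `k ∈ P`. -/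
def extendLeft (θ : K.subgroupOf P →* A)
    (hθ : ∀ (x : P) (r : K.subgroupOf P), θ (MulAut.conjNormal x r) = θ r) :
    P.comap (toAmbient K P) →* A :=
  MonoidHom.mk' (fun y ↦
    θ ⟨⟨y.1.left, mem_comap_toAmbient.1 y.2⟩, mem_subgroupOf.2 y.1.left.2⟩) fun y z ↦ by
    rw [← hθ y.1.right ⟨⟨z.1.left, _⟩, _⟩, ← map_mul]
    exact congrArg θ rfl

end ConjSemidirectProduct

open SemidirectProduct ConjSemidirectProduct

theorem exists_extend_pow_relIndex (K P : Subgroup G) [K.Normal] [P.IsFiniteRelIndex (K ⊔ P)]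
    (hK : ∀ f : K →* A, f = 1) (θ : K.subgroupOf P →* A)
    (hθ : ∀ (x : P) (r : K.subgroupOf P), θ (MulAut.conjNormal x r) = θ r) :
    ∃ δ : P →* A, ∀ r : K.subgroupOf P, δ r = θ r ^ P.relIndex (K ⊔ P) := by
  have : (P.comap (toAmbient K P)).FiniteIndex :=
    ⟨by rw [index_comap, range_toAmbient]; exact IsFiniteRelIndex.relIndex_ne_zero⟩
  let τ : ConjSemidirectProduct K P →* A := (extendLeft θ hθ).transfer
  refine ⟨(τ.comp inr)⁻¹, fun r ↦ ?_⟩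
  let k : K := ⟨r, r.2⟩
  -- `(k⁻¹, r)` lies in the kernel of `toAmbient`, which commutes with `K`, so only the
  -- `P`-component of `x` affects its conjugate by `x`.
  have hconj (x : ConjSemidirectProduct K P) :
      ((x⁻¹ * ⟨k⁻¹, r⟩ * x).left : G) = x.right⁻¹ * (r : P)⁻¹ * x.right := by
    simp [k, mul_assoc]
  have hτ : τ ⟨k⁻¹, r⟩ = (θ r)⁻¹ ^ P.relIndex (K ⊔ P) := by
    rw [← range_toAmbient, ← index_comap]
    refine transfer_eq_pow_index _ (fun x ↦ mem_comap_toAmbient.2 ?_) fun x ↦ ?_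
    · rw [hconj]; exact (x.right⁻¹ * (r : P)⁻¹ * x.right).2
    · rw [← map_inv, ← hθ x.right⁻¹ r⁻¹]
      refine congrArg θ (Subtype.ext (Subtype.ext ?_))
      simpa [mul_assoc] using hconj x
  have hinl : τ (inl k⁻¹) = 1 := DFunLike.congr_fun (hK (τ.comp inl)) k⁻¹
  rw [mk_eq_inl_mul_inr, map_mul, hinl, one_mul] at hτ
  rw [MonoidHom.inv_apply, MonoidHom.comp_apply, hτ, inv_pow, inv_inv]

end Transfer

section PResidual

variable {G H : Type*} [Group G] [Group H] {p : ℕ}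

/-- The `p`-residual `O^p(G)` of a group, generated by the elements of order prime to `p`. If `G` is
finite and `p` is prime, it is the smallest normal subgroup whose quotient is a `p`-group. -/
def pResidual (p : ℕ) (G : Type*) [Group G] : Subgroup G :=
  closure {g | ¬p ∣ orderOf g}

instance pResidual_characteristic : (pResidual p G).Characteristic := by
  refine characteristic_iff_map_le.2 fun φ ↦ ?_
  rw [pResidual, MonoidHom.map_closure]
  refine closure_mono ?_
  rintro _ ⟨g, hg, rfl⟩
  simpa using hg

theorem pResidual_eq_top_of_surjective {f : G →* H} (hf : Function.Surjective f)
    (hG : pResidual p G = ⊤) : pResidual p H = ⊤ := by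
  rw [eq_top_iff, ← map_top_of_surjective f hf, ← hG, pResidual, MonoidHom.map_closure]
  refine closure_mono ?_
  rintro _ ⟨g, hg, rfl⟩
  exact fun h ↦ hg (h.trans (orderOf_map_dvd f g))

theorem pResidual_pResidual : pResidual p (pResidual p G) = ⊤ := by
  refine eq_top_iff.2 (closure_closure_coe_preimage.ge.trans (closure_mono fun x hx ↦ ?_))
  rwa [Set.mem_preimage, Set.mem_ofPred_eq, orderOf_coe] at hx

theorem pResidual_le_ker [Fact p.Prime] (hH : IsPGroup p H) (f : G →* H) :
    pResidual p G ≤ f.ker :=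
  (closure_le _).2 fun g hg ↦ by_contra fun h ↦ hg ((hH.dvd_orderOf h).trans (orderOf_map_dvd f g))

theorem isPGroup_quotient_pResidual [Finite G] [Fact p.Prime] :
    IsPGroup p (G ⧸ pResidual p G) := by
  rw [isPGroup_iff_pow_pow_eq_one]
  intro x
  obtain ⟨g, rfl⟩ := QuotientGroup.mk_surjective x
  obtain ⟨e, n, hn, he⟩ :=
    Nat.exists_eq_pow_mul_and_not_dvd (orderOf_pos g).ne' p (Fact.out : p.Prime).ne_one
  refine ⟨e, (QuotientGroup.eq_one_iff _).2 (subset_closure ?_)⟩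
  have hpe : p ^ e ≠ 0 := pow_ne_zero _ (Fact.out : p.Prime).ne_zero
  rwa [Set.mem_ofPred_eq, orderOf_pow_of_dvd hpe ⟨n, he⟩, he, Nat.mul_div_cancel_left _ hpe.bot_lt]

theorem isNilpotent_of_not_dvd_card_pResidual [Finite G]
    (h : ∀ p ∈ (Nat.card G).primeFactors, ¬p ∣ Nat.card (pResidual p G)) :
    Group.IsNilpotent G := by
  have hnil (p : (Nat.card G).primeFactors) : Group.IsNilpotent (G ⧸ pResidual p G) := by
    have : Fact p.1.Prime := ⟨Nat.prime_of_mem_primeFactors p.2⟩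
    exact isPGroup_quotient_pResidual.isNilpotent
  refine Subgroup.isNilpotent_of_ker_le_center
    (MonoidHom.pi fun p : (Nat.card G).primeFactors ↦ QuotientGroup.mk' (pResidual p G)) ?_
  intro g hg
  have hmem (p : (Nat.card G).primeFactors) : g ∈ pResidual p G :=
    (QuotientGroup.eq_one_iff g).1 (congrFun hg p)
  suffices g = 1 by rw [this]; exact one_mem _
  by_contra hne
  obtain ⟨p, hp, hpg⟩ := Nat.exists_prime_and_dvd (orderOf_eq_one_iff.not.2 hne)
  have hpG : p ∈ (Nat.card G).primeFactors :=
    Nat.mem_primeFactors.2 ⟨hp, hpg.trans (orderOf_dvd_natCard g), Nat.card_pos.ne'⟩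
  exact h p hpG (hpg.trans ((pResidual p G).orderOf_dvd_natCard (hmem ⟨p, hpG⟩)))

end PResidual

section PResidualSylow

variable {G : Type*} [Group G]

theorem eq_bot_of_le_commutator_top [Group.IsNilpotent G] {R : Subgroup G} (hR : R ≤ ⁅R, ⊤⁆) :
    R = ⊥ := by
  obtain ⟨n, hn⟩ := Subgroup.nilpotent_iff_lowerCentralSeries.1 ‹Group.IsNilpotent G›
  have hle (n : ℕ) : R ≤ (⊤ : Subgroup G).lowerCentralSeries n := by
    induction n with
    | zero => exact le_top
    | succ n ih => exact hR.trans (commutator_mono ih le_rfl)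
  exact eq_bot_iff.2 (hn ▸ hle n)

variable {p : ℕ} [Fact p.Prime]

theorem monoidHom_eq_one_of_subgroupOf_le_frattini [Finite G] {A : Type*} [CommGroup A]
    (P : Sylow p G) {K : Subgroup G} [K.Normal] (hK : pResidual p K = ⊤)
    (hR : K.subgroupOf (P : Subgroup G) ≤ frattini P) {θ : K.subgroupOf (P : Subgroup G) →* A}
    (hsurj : Function.Surjective θ)
    (hθ : ∀ (x : (P : Subgroup G)) (r : K.subgroupOf (P : Subgroup G)),
      θ (MulAut.conjNormal x r) = θ r) : θ = 1 := by
  have hA : IsPGroup p A := (P.isPGroup'.to_subgroup _).of_surjective θ hsurj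
  have hpm : ¬p ∣ (P : Subgroup G).relIndex (K ⊔ P) := fun h ↦
    P.not_dvd_index (h.trans (relIndex_dvd_index_of_le le_sup_right))
  have : (P : Subgroup G).IsFiniteRelIndex (K ⊔ P) := ⟨fun h ↦ hpm (h ▸ dvd_zero p)⟩
  obtain ⟨δ, hδ⟩ := exists_extend_pow_relIndex K P
    (fun f ↦ MonoidHom.ker_eq_top_iff.1 (top_le_iff.1 (hK ▸ pResidual_le_ker hA f))) θ hθ
  have hsup : δ.ker ⊔ K.subgroupOf (P : Subgroup G) = ⊤ := by
    refine eq_top_iff.2 fun x _ ↦ ?_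
    obtain ⟨a, ha⟩ := (hA.powEquiv' hpm).surjective (δ x)
    obtain ⟨r, rfl⟩ := hsurj a
    have hx : x * (r : P)⁻¹ ∈ δ.ker := by
      rw [MonoidHom.mem_ker, map_mul, map_inv, hδ, ← ha]
      exact mul_inv_cancel _
    simpa using mul_mem_sup hx r.2
  have hker : δ.ker = ⊤ :=
    frattini_nongenerating (top_le_iff.1 (hsup ▸ sup_le_sup_left hR _))
  ext r
  refine (hA.powEquiv' hpm).injective ?_
  have hr : δ r = 1 := MonoidHom.mem_ker.1 (hker ▸ mem_top _)
  simp [← hδ, hr]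

open scoped IsMulCommutative in
theorem subgroupOf_eq_bot_of_le_frattini [Finite G] (P : Sylow p G)
    {K : Subgroup G} [K.Normal] (hK : pResidual p K = ⊤)
    (hR : K.subgroupOf (P : Subgroup G) ≤ frattini P) : K.subgroupOf (P : Subgroup G) = ⊥ := by
  have := P.isPGroup'.isNilpotent
  refine eq_bot_of_le_commutator_top ?_
  set R := K.subgroupOf (P : Subgroup G)
  let L : Subgroup R := (⁅R, (⊤ : Subgroup P)⁆).subgroupOf R
  have : IsMulCommutative (R ⧸ L) := by
    refine Normal.quotient_commutative_iff_commutator_le.2 ?_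
    rw [← map_subtype_le_map_subtype, map_subtype_commutator,
      subgroupOf_map_subtype]
    exact le_inf (commutator_mono le_rfl le_top) (commutator_le_left R R)
  have hθ : QuotientGroup.mk' L = 1 := by
    refine monoidHom_eq_one_of_subgroupOf_le_frattini P hK hR
      (QuotientGroup.mk'_surjective L) fun x r ↦ ?_
    refine QuotientGroup.eq_iff_div_mem.2 ?_
    rw [mem_subgroupOf, commutator_comm, coe_div, MulAut.conjNormal_apply, div_eq_mul_inv]
    exact commutator_mem_commutator (mem_top x) r.2
  exact subgroupOf_eq_top.1 ((QuotientGroup.ker_mk' L).symm.trans (hθ ▸ MonoidHom.ker_one))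

theorem relIndex_sup_of_disjoint {K P : Subgroup G} [K.Normal] (h : Disjoint K P) :
    P.relIndex (K ⊔ P) = Nat.card K := by
  have hdisj : Disjoint (K.subgroupOf (K ⊔ P)) (P.subgroupOf (K ⊔ P)) :=
    disjoint_def.2 fun hK hP ↦ Subtype.ext (disjoint_def.1 h hK hP)
  have hcompl : IsComplement' (K.subgroupOf (K ⊔ P)) (P.subgroupOf (K ⊔ P)) :=
    isComplement'_of_disjoint_and_mul_eq_univ hdisj
      (by rw [← normal_mul, (codisjoint_subgroupOf_sup K P).eq_top, coe_top])
  rw [relIndex, hcompl.index_eq_card]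
  exact Nat.card_congr (subgroupOfEquivOfLe le_sup_left).toEquiv

theorem not_dvd_card_pResidual_of_subgroupOf_le_frattini [Finite G] (P : Sylow p G)
    {M : Subgroup G} [M.Normal] (hM : M.subgroupOf (P : Subgroup G) ≤ frattini P) :
    ¬p ∣ Nat.card (pResidual p M) := by
  let K : Subgroup G := (pResidual p M).map M.subtype
  have hK : pResidual p K = ⊤ := pResidual_eq_top_of_surjective
    (M.subtype.subgroupMap_surjective _) pResidual_pResidual
  have hKP : K.subgroupOf (P : Subgroup G) = ⊥ :=
    subgroupOf_eq_bot_of_le_frattini P hK ((comap_mono (map_subtype_le _)).trans hM)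
  rw [← card_map_of_injective M.subtype_injective,
    ← relIndex_sup_of_disjoint (subgroupOf_eq_bot.1 hKP)]
  exact fun h ↦ P.not_dvd_index (h.trans (relIndex_dvd_index_of_le le_sup_right))

end PResidualSylow

section Frattini

variable {G G' : Type*} [Group G] [Group G']

/-- The Frattini subgroup `Φ(H)`, as a subgroup of `G`. -/
def frattiniOf (H : Subgroup G) : Subgroup G :=
  (frattini H).map H.subtype

theorem frattiniOf_le (H : Subgroup G) : frattiniOf H ≤ H :=
  map_subtype_le _

theorem card_frattiniOf (H : Subgroup G) : Nat.card (frattiniOf H) = Nat.card (frattini H) :=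
  card_map_of_injective H.subtype_injective

theorem inf_le_frattiniOf_iff {H K : Subgroup G} :
    K ⊓ H ≤ frattiniOf H ↔ K.subgroupOf H ≤ frattini H := by
  rw [frattiniOf, ← subgroupOf_map_subtype, map_subtype_le_map_subtype]

theorem map_frattiniOf_le (f : G →* G') (H : Subgroup G) :
    (frattiniOf H).map f ≤ frattiniOf (H.map f) := by
  rintro _ ⟨_, ⟨x, hx, rfl⟩, rfl⟩
  exact ⟨_, frattini_le_comap_frattini_of_surjective (f.subgroupMap_surjective H) hx, rfl⟩

end Frattini

section TateTheorem

variable {G : Type*} [Group G]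

theorem map_inf_map_le_of_ker_le {G' : Type*} [Group G'] {f : G →* G'} {H K : Subgroup G}
    (hf : f.ker ≤ H) : H.map f ⊓ K.map f ≤ (H ⊓ K).map f := by
  rintro _ ⟨hxH, x, hxK, rfl⟩
  exact mem_map_of_mem f ⟨comap_map_eq_self hf ▸ hxH, hxK⟩

variable [Finite G]

theorem isNilpotent_of_inf_le_frattiniOf (M : Subgroup G) [M.Normal]
    (h : ∀ p ∈ (Nat.card G).primeFactors, ∃ P : Sylow p G, M ⊓ P ≤ frattiniOf (P : Subgroup G)) :
    Group.IsNilpotent M := by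
  refine isNilpotent_of_not_dvd_card_pResidual fun p hp ↦ ?_
  have : Fact p.Prime := ⟨Nat.prime_of_mem_primeFactors hp⟩
  obtain ⟨P, hP⟩ := h p (Nat.primeFactors_mono M.card_subgroup_dvd_card Nat.card_pos.ne' hp)
  exact not_dvd_card_pResidual_of_subgroupOf_le_frattini P (inf_le_frattiniOf_iff.1 hP)

theorem isNilpotent_quotient_of_inf_le_sup_frattiniOf {M N : Subgroup G} [M.Normal] [N.Normal]
    (hNM : N ≤ M) (S : ∀ p, Sylow p G)
    (h : ∀ p ∈ (Nat.card G).primeFactors, M ⊓ S p ≤ N ⊔ frattiniOf (S p : Subgroup G)) :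
    Group.IsNilpotent (M ⧸ N.subgroupOf M) := by
  let f := QuotientGroup.mk' N
  have hf : Function.Surjective f := QuotientGroup.mk'_surjective N
  have : (M.map f).Normal := Normal.map ‹_› f hf
  have hnil : Group.IsNilpotent (M.map f) := by
    refine isNilpotent_of_inf_le_frattiniOf _ fun p hp ↦ ?_
    have : Fact p.Prime := ⟨Nat.prime_of_mem_primeFactors hp⟩
    refine ⟨(S p).mapSurjective hf, ?_⟩
    rw [Sylow.coe_mapSurjective]
    calc M.map f ⊓ (S p : Subgroup G).map f
        ≤ (M ⊓ S p).map f := map_inf_map_le_of_ker_le ((QuotientGroup.ker_mk' N).trans_le hNM)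
      _ ≤ (N ⊔ frattiniOf (S p : Subgroup G)).map f :=
        map_mono (h p (Nat.primeFactors_mono N.card_quotient_dvd_card Nat.card_pos.ne' hp))
      _ = (frattiniOf (S p : Subgroup G)).map f := by
        rw [Subgroup.map_sup, QuotientGroup.map_mk'_self, bot_sup_eq]
      _ ≤ frattiniOf ((S p : Subgroup G).map f) := map_frattiniOf_le f _
  let e : (M ⧸ N.subgroupOf M) ≃* M.map f :=
    (QuotientGroup.quotientMulEquivOfEq
      (by rw [ker_subgroupMap, QuotientGroup.ker_mk'])).trans
      (QuotientGroup.quotientKerEquivOfSurjective _ (f.subgroupMap_surjective M))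
  exact (Group.isNilpotent_congr e).2 hnil

end TateTheorem

section PGroup

variable {Q : Type*} [Group Q] [Finite Q] {p : ℕ} [Fact p.Prime]

theorem index_eq_of_isCoatom (hQ : IsPGroup p Q) {H : Subgroup Q} (hH : IsCoatom H) :
    H.index = p := by
  have hp : p.Prime := Fact.out
  obtain ⟨n, hn⟩ := (hQ.to_subgroup H).exists_card_eq
  obtain ⟨k, hk⟩ := hQ.index H
  have hk0 : k ≠ 0 := by
    rintro rfl
    exact hH.1 (index_eq_one.1 hk)
  have hdvd : p ^ (n + 1) ∣ Nat.card Q := by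
    rw [← H.card_mul_index, hn, hk, pow_succ]
    exact mul_dvd_mul_left _ (dvd_pow_self p hk0)
  obtain ⟨K, hK, hHK⟩ := Sylow.exists_subgroup_card_pow_succ hdvd hn
  have hlt : H < K := by
    refine hHK.lt_of_ne ?_
    rintro rfl
    exact (Nat.pow_lt_pow_succ hp.one_lt).ne (hn.symm.trans hK)
  have hcard : p ^ n * H.index = p ^ n * p := by
    rw [← hn, H.card_mul_index, ← card_top (G := Q), ← hH.2 K hlt, hK, hn, pow_succ]
  exact Nat.eq_of_mul_eq_mul_left (pow_pos hp.pos n) hcard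

theorem normal_of_isCoatom (hQ : IsPGroup p Q) {H : Subgroup Q} (hH : IsCoatom H) : H.Normal :=
  have := hQ.isNilpotent
  NormalizerCondition.normal_of_coatom H Group.normalizerCondition_of_isNilpotent hH

theorem pow_mem_frattini (hQ : IsPGroup p Q) (x : Q) : x ^ p ∈ frattini Q := by
  simp only [frattini, Order.radical, mem_iInf]
  intro H hH
  have := normal_of_isCoatom hQ hH
  exact index_eq_of_isCoatom hQ hH ▸ H.pow_index_mem x

theorem commutator_le_frattini (hQ : IsPGroup p Q) : commutator Q ≤ frattini Q := by
  refine le_iInf₂ fun H hH ↦ ?_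
  have := normal_of_isCoatom hQ hH
  have : IsCyclic (Q ⧸ H) := isCyclic_of_prime_card (index_eq_of_isCoatom hQ hH)
  exact Normal.quotient_commutative_iff_commutator_le.1 inferInstance

open scoped IsMulCommutative in
theorem card_quotient_frattini_dvd (hQ : IsPGroup p Q) :
    Nat.card (Q ⧸ frattini Q) ∣ p ^ Group.rank Q := by
  have : IsMulCommutative (Q ⧸ frattini Q) :=
    Normal.quotient_commutative_iff_commutator_le.2 (commutator_le_frattini hQ)
  have hexp (x : Q ⧸ frattini Q) : x ^ p = 1 := by
    obtain ⟨x, rfl⟩ := QuotientGroup.mk_surjective x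
    exact (QuotientGroup.eq_one_iff _).2 (pow_mem_frattini hQ x)
  exact (card_dvd_exponent_pow_rank' _ hexp).trans
    (pow_dvd_pow p (Group.rank_le_of_surjective _ (QuotientGroup.mk'_surjective _)))

end PGroup

section FrattiniDim

variable {G : Type*} [Group G]

/-- The dimension `log_p |(H ∩ P)Φ(P) / Φ(P)|` over `𝔽_p` of the image of `H ∩ P` in `P / Φ(P)`,
meant for `P` a finite `p`-subgroup. -/
noncomputable def frattiniDim (p : ℕ) (P H : Subgroup G) : ℕ :=
  Nat.log p (Nat.card ↥(H ⊓ P ⊔ frattiniOf P) / Nat.card (frattiniOf P))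

/-- The invariant `∑_p log_p |(H ∩ S_p)Φ(S_p) / Φ(S_p)|` of a subgroup `H`; for `H = G_i` it is the
number `r_i`. -/
noncomputable def totalFrattiniDim (S : ∀ p, Sylow p G) (H : Subgroup G) : ℕ :=
  ∑ p ∈ (Nat.card G).primeFactors, frattiniDim p (S p : Subgroup G) H

variable [Finite G] {p : ℕ} [Fact p.Prime] {P H K : Subgroup G}

theorem card_inf_sup_frattiniOf (hP : IsPGroup p P) (H : Subgroup G) :
    Nat.card ↥(H ⊓ P ⊔ frattiniOf P) = Nat.card (frattiniOf P) * p ^ frattiniDim p P H := by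
  have hle : H ⊓ P ⊔ frattiniOf P ≤ P := sup_le inf_le_right (frattiniOf_le P)
  have hcard : Nat.card (frattiniOf P) * (frattiniOf P).relIndex (H ⊓ P ⊔ frattiniOf P) =
      Nat.card ↥(H ⊓ P ⊔ frattiniOf P) := by
    simpa only [relIndex_bot_left] using relIndex_mul_relIndex ⊥ _ _ bot_le le_sup_right
  obtain ⟨n, hn⟩ := (hP.to_le hle).index ((frattiniOf P).subgroupOf _)
  rw [← relIndex] at hn
  rw [frattiniDim, ← hcard, hn, Nat.mul_div_cancel_left _ Nat.card_pos,
    Nat.log_pow (Fact.out : p.Prime).one_lt]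

theorem frattiniDim_mono (p : ℕ) (P : Subgroup G) : Monotone (frattiniDim p P) := fun _ _ h ↦
  Nat.log_mono_right (Nat.div_le_div_right
    (card_le_of_le (sup_le_sup_right (inf_le_inf_right P h) _)))

theorem inf_le_sup_frattiniOf_of_frattiniDim_eq (hP : IsPGroup p P) (hHK : H ≤ K)
    (h : frattiniDim p P H = frattiniDim p P K) : K ⊓ P ≤ H ⊔ frattiniOf P := by
  have heq : H ⊓ P ⊔ frattiniOf P = K ⊓ P ⊔ frattiniOf P :=
    eq_of_le_of_card_ge (sup_le_sup_right (inf_le_inf_right P hHK) _)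
      (by rw [card_inf_sup_frattiniOf hP, card_inf_sup_frattiniOf hP, h])
  calc K ⊓ P ≤ K ⊓ P ⊔ frattiniOf P := le_sup_left
    _ = H ⊓ P ⊔ frattiniOf P := heq.symm
    _ ≤ H ⊔ frattiniOf P := sup_le_sup_right inf_le_left _

theorem frattiniDim_le_rank (hP : IsPGroup p P) (H : Subgroup G) :
    frattiniDim p P H ≤ Group.rank P := by
  have hp : p.Prime := Fact.out
  refine (Nat.pow_le_pow_iff_right hp.one_lt).1 (Nat.le_of_mul_le_mul_left ?_
    (Nat.card_pos (α := frattiniOf P)))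
  calc Nat.card (frattiniOf P) * p ^ frattiniDim p P H
      = Nat.card ↥(H ⊓ P ⊔ frattiniOf P) := (card_inf_sup_frattiniOf hP H).symm
    _ ≤ Nat.card P := card_le_of_le (sup_le inf_le_right (frattiniOf_le P))
    _ = Nat.card (frattiniOf P) * Nat.card (P ⧸ frattini P) := by
      rw [card_frattiniOf, mul_comm, ← card_eq_card_quotient_mul_card_subgroup]
    _ ≤ Nat.card (frattiniOf P) * p ^ Group.rank P := Nat.mul_le_mul_left _
      (Nat.le_of_dvd (pow_pos hp.pos _) (card_quotient_frattini_dvd hP))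

theorem totalFrattiniDim_lt (S : ∀ p, Sylow p G) {M N : Subgroup G} [M.Normal] [N.Normal]
    (hNM : N ≤ M) (h : ¬Group.IsNilpotent (M ⧸ N.subgroupOf M)) :
    totalFrattiniDim S N < totalFrattiniDim S M := by
  have hle (p) (_ : p ∈ (Nat.card G).primeFactors) :
      frattiniDim p (S p : Subgroup G) N ≤ frattiniDim p (S p : Subgroup G) M :=
    frattiniDim_mono p _ hNM
  refine (Finset.sum_le_sum hle).lt_of_ne fun heq ↦ h ?_
  refine isNilpotent_quotient_of_inf_le_sup_frattiniOf hNM S fun p hp ↦ ?_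
  have : Fact p.Prime := ⟨Nat.prime_of_mem_primeFactors hp⟩
  exact inf_le_sup_frattiniOf_of_frattiniDim_eq (S p).isPGroup' hNM
    ((Finset.sum_eq_sum_iff_of_le hle).1 heq p hp)

theorem totalFrattiniDim_le_sum_rank (S : ∀ p, Sylow p G) (H : Subgroup G) :
    totalFrattiniDim S H ≤
      ∑ p ∈ (Nat.card G).primeFactors, Group.rank (S p : Subgroup G) := by
  refine Finset.sum_le_sum fun p hp ↦ ?_
  have : Fact p.Prime := ⟨Nat.prime_of_mem_primeFactors hp⟩
  exact frattiniDim_le_rank (S p).isPGroup' H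

end FrattiniDim

section Chain

variable {G : Type*} [Group G] {t : ℕ}

theorem le_apply_zero_of_strictAnti {r : Fin (t + 1) → ℕ} (hr : StrictAnti r) : t ≤ r 0 := by
  let f (i : Fin (t + 1)) : Fin (r 0 + 1) :=
    ⟨r i, Nat.lt_succ_of_le (hr.antitone (Fin.zero_le i))⟩
  have hf : Function.Injective f := fun i j h ↦ hr.injective (congrArg Fin.val h)
  simpa using Fintype.card_le_of_injective f hf

theorem normal_of_forall_characteristic {Gs : Fin (t + 1) → Subgroup G} (h0 : (Gs 0).Normal)
    (hle : ∀ i : Fin t, Gs i.succ ≤ Gs i.castSucc)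
    (hchar : ∀ i : Fin t, ((Gs i.succ).subgroupOf (Gs i.castSucc)).Characteristic)
    (i : Fin (t + 1)) : (Gs i).Normal := by
  induction i using Fin.induction with
  | zero => exact h0
  | succ i ih =>
    have := hchar i
    rw [← inf_eq_left.2 (hle i), ← subgroupOf_map_subtype]
    exact ConjAct.normal_of_characteristic_of_normal

theorem chain_length_le_sum_rank_general [Finite G] (Gs : Fin (t + 1) → Subgroup G)
    [∀ i, (Gs i).Normal] (hle : ∀ i : Fin t, Gs i.succ ≤ Gs i.castSucc)
    (hnonnil : ∀ i : Fin t,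
      ¬Group.IsNilpotent (Gs i.castSucc ⧸ (Gs i.succ).subgroupOf (Gs i.castSucc)))
    (S : ∀ p : ℕ, Sylow p G) :
    (∀ i : Fin t, totalFrattiniDim S (Gs i.succ) < totalFrattiniDim S (Gs i.castSucc)) ∧
      t ≤ ∑ p ∈ (Nat.card G).primeFactors, Group.rank (S p : Subgroup G) := by
  have hlt (i : Fin t) : totalFrattiniDim S (Gs i.succ) < totalFrattiniDim S (Gs i.castSucc) :=
    totalFrattiniDim_lt S (hle i) (hnonnil i)
  refine ⟨hlt, ?_⟩
  have hanti : StrictAnti fun i ↦ totalFrattiniDim S (Gs i) := Fin.strictAnti_iff_succ_lt.2 hlt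
  calc t ≤ totalFrattiniDim S (Gs 0) := le_apply_zero_of_strictAnti hanti
    _ ≤ _ := totalFrattiniDim_le_sum_rank S (Gs 0)

end Chain

/-- Let `G = G_0 > G_1 > ...` be a chain in which each `G_{i+1}` is a proper characteristic
subgroup of `G_i` with `G_i/G_{i+1}` non-nilpotent. With
`r_i = Σ_p log_p |(G_i ∩ S_p)Φ(S_p)/Φ(S_p)|`, the sequence `r_i` is strictly decreasing,
so the chain has length at most `r_0 = Σ_p d(S_p)`. -/
theorem chain_length_le_sum_rank {G : Type*} [Group G] [Finite G]
    (t : ℕ) (Gs : Fin (t + 1) → Subgroup G) (h0 : Gs 0 = ⊤)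
    (hlt : ∀ i : Fin t, Gs i.succ < Gs i.castSucc)
    (hchar : ∀ i : Fin t, ((Gs i.succ).subgroupOf (Gs i.castSucc)).Characteristic)
    (hnonnil : ∀ i : Fin t, ¬ Group.IsNilpotent
      (↥(Gs i.castSucc) ⧸ Subgroup.normalClosure
        (((Gs i.succ).subgroupOf (Gs i.castSucc) : Subgroup ↥(Gs i.castSucc)) :
          Set ↥(Gs i.castSucc))))
    (S : ∀ p : ℕ, Sylow p G) :
    (∀ i : Fin t,
        (∑ p ∈ (Nat.card G).primeFactors, Nat.log p
          (Nat.card ↥(Gs i.succ ⊓ (S p : Subgroup G) ⊔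
              (frattini ↥(S p : Subgroup G)).map (S p : Subgroup G).subtype) /
            Nat.card ↥((frattini ↥(S p : Subgroup G)).map (S p : Subgroup G).subtype))) <
        ∑ p ∈ (Nat.card G).primeFactors, Nat.log p
          (Nat.card ↥(Gs i.castSucc ⊓ (S p : Subgroup G) ⊔
              (frattini ↥(S p : Subgroup G)).map (S p : Subgroup G).subtype) /
            Nat.card ↥((frattini ↥(S p : Subgroup G)).map (S p : Subgroup G).subtype))) ∧
      t ≤ ∑ p ∈ (Nat.card G).primeFactors, Group.rank ↥(S p : Subgroup G) := by
  have := normal_of_forall_characteristic (h0 ▸ normal_top) (fun i ↦ (hlt i).le) hchar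
  refine chain_length_le_sum_rank_general Gs (fun i ↦ (hlt i).le) (fun i h ↦ hnonnil i ?_) S
  exact (Group.isNilpotent_congr
    (QuotientGroup.quotientMulEquivOfEq (normalClosure_eq_self _))).2 h
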